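/- Let λ ∈ Λ_I⁺, β ∈ Φ \ Φ_λ, and γ, ν ∈ Φ_{β,2}. Then sgn(s_γλ, s_νλ) = sgn(s_γ(λ|_{Φ_{β,2}}), s_ν(λ|_{Φ_{β,2}}), Φ_I ∩ Φ_{β,2}, Φ_{β,2}). -/

import Mathlib

open scoped RealInnerProductSpace
open Classical

noncomputable section

namespace JantzenGVM

variable {V : Type*} [NormedAddCommGroup V] [InnerProductSpace ℝ V] [FiniteDimensional ℝ V]

/-- The coroot `α^∨ = 2α/⟨α,α⟩` of a vector `α` (junk value `0` when `α = 0`). -/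
def coroot (α : V) : V := (2 / ⟪α, α⟫) • α

/-- The linear functional `v ↦ ⟨v, α^∨⟩`. -/
def corootForm (α : V) : V →ₗ[ℝ] ℝ where
  toFun v := ⟪v, coroot α⟫
  map_add' x y := by simp [inner_add_left]
  map_smul' c x := by simp [inner_smul_left]

lemma corootForm_self {α : V} (h : ⟪α, α⟫ ≠ 0) : corootForm α α = 2 := by
  simp only [corootForm, coroot, LinearMap.coe_mk, AddHom.coe_mk, real_inner_smul_right]
  field_simp

/-- The reflection `s_α` as a linear automorphism of `V` (the identity when `⟨α,α⟩ = 0`). -/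
def reflV (α : V) : V ≃ₗ[ℝ] V :=
  if h : ⟪α, α⟫ = 0 then LinearEquiv.refl ℝ V
  else Module.reflection (corootForm_self h)

/-- `h* = ℂ ⊗ V`, realized as the space of real-linear functionals `V → ℂ` via the
inner product; an element `λ` pairs with a root `α` by `⟨λ, α⟩ = λ α` and with the
coroot by `⟨λ, α^∨⟩ = λ (coroot α)`. -/
abbrev HStar (V : Type*) [NormedAddCommGroup V] [InnerProductSpace ℝ V] := V →ₗ[ℝ] ℂ

/-- The canonical embedding of `V` into `h*`. -/
def emb (α : V) : HStar V where
  toFun v := (⟪α, v⟫ : ℂ)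
  map_add' x y := by simp [inner_add_right]
  map_smul' c x := by simp [inner_smul_right, Complex.real_smul]

/-- The action of a linear automorphism `w` of `V` on `h*`: `(w • λ)(v) = λ(w⁻¹ v)`. -/
def wAct (w : V ≃ₗ[ℝ] V) (l : HStar V) : HStar V := l ∘ₗ (w.symm : V →ₗ[ℝ] V)

/-- The reflection `s_β λ = λ - ⟨λ, β^∨⟩ β` acting on `h*`. -/
def sRefl (β : V) (l : HStar V) : HStar V := l - l (coroot β) • emb β

/-- The group generated by the reflections in the elements of `Φ'`. -/
def weyl (Φ' : Set V) : Subgroup (V ≃ₗ[ℝ] V) :=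
  Subgroup.closure {w | ∃ α ∈ Φ', w = reflV α}

/-- A finite, reduced, crystallographic root system spanning the Euclidean space `V`,
together with a choice of positive system and the corresponding simple system. -/
structure RootSys (V : Type*) [NormedAddCommGroup V] [InnerProductSpace ℝ V]
    [FiniteDimensional ℝ V] where
  Φ : Finset V
  pos : Finset V
  Δ : Finset V
  ne_zero : ∀ α ∈ Φ, α ≠ (0 : V)
  span_eq_top : Submodule.span ℝ (Φ : Set V) = ⊤
  reduced : ∀ α ∈ Φ, ∀ c : ℝ, c • α ∈ Φ → c = 1 ∨ c = -1
  refl_mem : ∀ α ∈ Φ, ∀ β ∈ Φ, reflV α β ∈ Φ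
  crystallographic : ∀ α ∈ Φ, ∀ β ∈ Φ, ∃ n : ℤ, ⟪β, coroot α⟫ = (n : ℝ)
  pos_subset : pos ⊆ Φ
  mem_pos_or : ∀ α ∈ Φ, α ∈ pos ∨ -α ∈ pos
  not_both : ∀ α ∈ pos, -α ∉ pos
  simple_subset : Δ ⊆ pos
  simple_indep : LinearIndependent ℝ (fun x : {a : V // a ∈ Δ} => x.1)
  simple_gen : ∀ β ∈ pos, ∃ c : V → ℝ, (∀ α ∈ Δ, 0 ≤ c α) ∧ β = ∑ α ∈ Δ, c α • α

/-- A subsystem of the root system: a subset of `Φ` closed under its own reflections. -/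
def IsSubsystem (S : RootSys V) (Φ' : Set V) : Prop :=
  Φ' ⊆ (S.Φ : Set V) ∧ ∀ α ∈ Φ', ∀ β ∈ Φ', reflV α β ∈ Φ'

/-- The length of `w`, i.e. the number of positive roots sent to negative roots
(this equals the Coxeter length for elements of the Weyl group). -/
def len (S : RootSys V) (w : V ≃ₗ[ℝ] V) : ℕ :=
  {β ∈ (S.pos : Set V) | w β ∉ (S.pos : Set V)}.ncard

/-- `Φ_I = ℤI ∩ Φ`, the subsystem generated by a subset `I` of the simple roots. -/
def PhiI (S : RootSys V) (I : Finset V) : Set V :=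
  {α ∈ (S.Φ : Set V) | α ∈ Submodule.span ℤ (I : Set V)}

/-- `z` is a positive integer. -/
def IsPosInt (z : ℂ) : Prop := ∃ n : ℤ, 0 < n ∧ z = (n : ℂ)

/-- `z` is an integer. -/
def IsInt (z : ℂ) : Prop := ∃ n : ℤ, z = (n : ℂ)

/-- `Λ_I⁺ = {λ ∈ h* : ⟨λ, α^∨⟩ ∈ ℤ_{>0} for all α ∈ I}`. -/
def LambdaP (I : Set V) : Set (HStar V) :=
  {l | ∀ α ∈ I, IsPosInt (l (coroot α))}

/-- `Λ⁺(Φ'', Φ') = {ν ∈ ℂΦ' : ⟨ν, α^∨⟩ ∈ ℤ_{>0} for all α ∈ Φ'' ∩ Φ⁺}`. -/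
def LambdaPSub (S : RootSys V) (Φ'' Φ' : Set V) : Set (HStar V) :=
  {l | l ∈ Submodule.span ℂ (emb '' Φ') ∧
       ∀ α ∈ Φ'' ∩ (S.pos : Set V), IsPosInt (l (coroot α))}

/-- `λ` is `Φ''`-regular: `⟨λ, α⟩ ≠ 0` for all `α ∈ Φ''`. -/
def IsRegularOn (Φ'' : Set V) (l : HStar V) : Prop := ∀ α ∈ Φ'', l α ≠ 0

/-- `Ψ⁺(λ, Φ'', Φ') = {β ∈ (Φ' ∩ Φ⁺) \ Φ'' : ⟨λ, β^∨⟩ ∈ ℤ_{>0}}`. -/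
def PsiP (S : RootSys V) (Φ'' Φ' : Set V) (l : HStar V) : Set V :=
  {β | β ∈ Φ' ∩ (S.pos : Set V) ∧ β ∉ Φ'' ∧ IsPosInt (l (coroot β))}

/-- `Ψ⁺⁺(λ, Φ'', Φ') = {β ∈ Ψ⁺(λ, Φ'', Φ') : s_β λ is Φ''-regular}`. -/
def PsiPP (S : RootSys V) (Φ'' Φ' : Set V) (l : HStar V) : Set V :=
  {β ∈ PsiP S Φ'' Φ' l | ∀ α ∈ Φ'', (sRefl β l) α ≠ 0}

/-- The sign function: `sgn(λ, μ) = (-1)^{ℓ(w)}` if `λ, μ` are `Φ''`-regular and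
`μ = wλ` for some `w ∈ W(Φ'')`, and `0` otherwise. -/
def sgnW (S : RootSys V) (Φ'' : Set V) (l m : HStar V) : ℤ :=
  if h : IsRegularOn Φ'' l ∧ IsRegularOn Φ'' m ∧ ∃ w, w ∈ weyl Φ'' ∧ m = wAct w l
  then (-1) ^ len S h.2.2.choose else 0

/-- The Jantzen coefficient `c(λ, μ, Φ'', Φ') = Σ_{β ∈ Ψ⁺⁺(λ,Φ'',Φ')} sgn(s_β λ, μ)`. -/
def jc (S : RootSys V) (Φ'' Φ' : Set V) (l m : HStar V) : ℤ :=
  ∑ᶠ β ∈ PsiPP S Φ'' Φ' l, sgnW S Φ'' (sRefl β l) m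

/-- The symmetrized Jantzen coefficient `c̃(λ, μ, Φ'', Φ')`. -/
def jcSym (S : RootSys V) (Φ'' Φ' : Set V) (l m : HStar V) : ℤ :=
  jc S Φ'' Φ' l m + jc S Φ'' Φ' m l

/-- `θ(λ) = Σ_{w ∈ W_I} (-1)^{ℓ(w)} e^{wλ}` in the free `ℤ`-module on `h*`. -/
def theta (S : RootSys V) (I : Finset V) (l : HStar V) : HStar V →₀ ℤ :=
  ∑ᶠ w ∈ (weyl (PhiI S I) : Set (V ≃ₗ[ℝ] V)),
    Finsupp.single (wAct w l) ((-1) ^ len S w)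

/-- `Φ_λ = {α ∈ Φ : ⟨λ, α⟩ = 0}`. -/
def singSet (S : RootSys V) (l : HStar V) : Set V :=
  {α ∈ (S.Φ : Set V) | l α = 0}

/-- `Φ_{[λ]} = {α ∈ Φ : ⟨λ, α^∨⟩ ∈ ℤ}`. -/
def integralSet (S : RootSys V) (l : HStar V) : Set V :=
  {α ∈ (S.Φ : Set V) | IsInt (l (coroot α))}

/-- `(ℚ A) ∩ Φ`, the intersection of the rational span of `A` with `Φ`.
Taking `A = Φ_I ∪ {β}` gives `Φ_{β,1}`; taking `A = Φ_λ ∪ {β}` gives `Φ_{β,2}`. -/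
def ratSpanRoots (S : RootSys V) (A : Set V) : Set V :=
  {γ ∈ (S.Φ : Set V) | ∃ (t : Finset V) (c : V → ℚ),
    (t : Set V) ⊆ A ∧ γ = ∑ α ∈ t, (c α : ℝ) • α}

/-- `Φ_{β,0}`, the irreducible component of `Φ` containing `β`. -/
def component (S : RootSys V) (β : V) : Set V :=
  {γ ∈ (S.Φ : Set V) |
    Relation.ReflTransGen
      (fun x y => x ∈ (S.Φ : Set V) ∧ y ∈ (S.Φ : Set V) ∧ ⟪x, y⟫ ≠ 0) β γ}

/-- `λ|_{Φ'}`: the unique element of `ℂΦ'` with `⟨λ|_{Φ'}, α^∨⟩ = ⟨λ, α^∨⟩`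
for all `α ∈ Φ'`. -/
def restrictW (Φ' : Set V) (l : HStar V) : HStar V :=
  letI : Nonempty (HStar V) := ⟨0⟩
  Classical.epsilon fun m =>
    m ∈ Submodule.span ℂ (emb '' Φ') ∧ ∀ α ∈ Φ', m (coroot α) = l (coroot α)

/-- `ᴵWᴶ = {w ∈ W : ℓ(uwv) = ℓ(u) + ℓ(w) + ℓ(v) for all u ∈ W_I, v ∈ W_J}`. -/
def doubleCoset (S : RootSys V) (I J : Finset V) : Set (V ≃ₗ[ℝ] V) :=
  {w | w ∈ weyl (S.Φ : Set V) ∧ ∀ u ∈ weyl (PhiI S I), ∀ v ∈ weyl (PhiI S J),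
    len S (u * w * v) = len S u + len S w + len S v}

/-- The fundamental weight `ϖ_j` relative to an enumeration `e` of the simple roots:
the unique element of `h*` with `⟨ϖ_j, α_k^∨⟩ = δ_{jk}`. -/
def fundWeight {n : ℕ} (e : Fin n → V) (j : Fin n) : HStar V :=
  letI : Nonempty (HStar V) := ⟨0⟩
  Classical.epsilon fun m => ∀ k : Fin n, m (coroot (e k)) = if k = j then 1 else 0

/-- The labels of the irreducible Dynkin types. -/
inductive LieType | A | B | C | D | E | F | G
deriving DecidableEq

/-- The Cartan matrix of type `A_n` (1-based indices): entry `(i,j)` is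
`⟨α_i, α_j^∨⟩`. -/
def cartanA (i j : ℕ) : ℤ :=
  if i = j then 2 else if i + 1 = j ∨ j + 1 = i then -1 else 0

/-- The Cartan matrices of the irreducible types in the standard (Bourbaki/Humphreys)
numbering of the Dynkin diagram: `cartanEntry t n i j = ⟨α_i, α_j^∨⟩` (1-based). -/
def cartanEntry : LieType → ℕ → ℕ → ℕ → ℤ
  | .A, _, i, j => cartanA i j
  | .B, n, i, j => if i + 1 = n ∧ j = n then -2 else cartanA i j
  | .C, n, i, j => if i = n ∧ j + 1 = n then -2 else cartanA i j
  | .D, n, i, j =>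
      if i = j then 2
      else if (i + 2 = n ∧ j = n) ∨ (i = n ∧ j + 2 = n) then -1
      else if (i + 1 = n ∧ j = n) ∨ (i = n ∧ j + 1 = n) then 0
      else cartanA i j
  | .E, _, i, j =>
      if i = j then 2
      else if (i = 1 ∧ j = 3) ∨ (i = 3 ∧ j = 1) ∨ (i = 2 ∧ j = 4) ∨ (i = 4 ∧ j = 2) then -1
      else if (i = 1 ∧ j = 2) ∨ (i = 2 ∧ j = 1) ∨ (i = 2 ∧ j = 3) ∨ (i = 3 ∧ j = 2) then 0
      else cartanA i j
  | .F, _, i, j => if i = 2 ∧ j = 3 then -2 else cartanA i j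
  | .G, _, i, j => if i = 2 ∧ j = 1 then -3 else cartanA i j

/-- The standard basis vector `e_k` (1-based index, junk `0` outside `1 ≤ k ≤ n`). -/
def stdE (n k : ℕ) : EuclideanSpace ℝ (Fin n) :=
  if h : 1 ≤ k ∧ k ≤ n then EuclideanSpace.single ⟨k - 1, by omega⟩ 1 else 0

/-- The labels `B`, `C`, `D` of the classical non-`A` types. -/
inductive BCD | B | C | D
deriving DecidableEq

/-- The root set of `B_n` / `C_n` / `D_n` in the standard realization. -/
def bcdRoots (t : BCD) (n : ℕ) : Set (EuclideanSpace ℝ (Fin n)) :=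
  {v | (∃ i j : ℕ, 1 ≤ i ∧ i < j ∧ j ≤ n ∧
          (v = stdE n i - stdE n j ∨ v = -(stdE n i - stdE n j) ∨
           v = stdE n i + stdE n j ∨ v = -(stdE n i + stdE n j))) ∨
       (match t with
        | .B => ∃ i : ℕ, 1 ≤ i ∧ i ≤ n ∧ (v = stdE n i ∨ v = -stdE n i)
        | .C => ∃ i : ℕ, 1 ≤ i ∧ i ≤ n ∧ (v = (2:ℝ) • stdE n i ∨ v = -((2:ℝ) • stdE n i))
        | .D => False)}

/-- The positive roots of `B_n` / `C_n` / `D_n` in the standard realization. -/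
def bcdPos (t : BCD) (n : ℕ) : Set (EuclideanSpace ℝ (Fin n)) :=
  {v | (∃ i j : ℕ, 1 ≤ i ∧ i < j ∧ j ≤ n ∧
          (v = stdE n i - stdE n j ∨ v = stdE n i + stdE n j)) ∨
       (match t with
        | .B => ∃ i : ℕ, 1 ≤ i ∧ i ≤ n ∧ v = stdE n i
        | .C => ∃ i : ℕ, 1 ≤ i ∧ i ≤ n ∧ v = (2:ℝ) • stdE n i
        | .D => False)}

/-- The simple roots of `B_n` / `C_n` / `D_n` in the standard realization. -/
def bcdSimple (t : BCD) (n : ℕ) : Set (EuclideanSpace ℝ (Fin n)) :=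
  {v | (∃ i : ℕ, 1 ≤ i ∧ i < n ∧ v = stdE n i - stdE n (i + 1)) ∨
       (match t with
        | .B => v = stdE n n
        | .C => v = (2:ℝ) • stdE n n
        | .D => v = stdE n (n - 1) + stdE n n)}

/-- The simple root `α_k` of `B_n` / `C_n` / `D_n` (1-based index `k`). -/
def bcdAlpha (t : BCD) (n k : ℕ) : EuclideanSpace ℝ (Fin n) :=
  if k < n then stdE n k - stdE n (k + 1)
  else match t with
  | .B => stdE n n
  | .C => (2:ℝ) • stdE n n
  | .D => stdE n (n - 1) + stdE n n

/-!
Let `Φ' = Φ_{β,2}` and let `l`, `m` be weights that agree on `Φ'`, where every root orthogonal to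
`l` lies in `Φ'`. For `u, v` in the Weyl group of `Φ'`, an element `w` of `W_I` carries `u l` to
`v l` exactly when `x = v⁻¹ w u` fixes `l`. The stabilizer of `l` is generated by the reflections
in the roots orthogonal to `l`, so then `x`, and with it `w`, lies in the Weyl group of `Φ'`.
Conversely, an `x` in that group moves vectors only within the span of `Φ'`, so it fixes `l` if
and only if it fixes `m`. Hence both signs range over the same elements `w`, provided that `W_I ∩
W(Φ') = W(Φ_I ∩ Φ')`.

This last fact and the description of the stabilizer both follow from a theorem of Steinberg and
Carter: an element `w` of a finite reflection group is a product of reflections in the roots that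
lie in the moved space `im (w - 1)`. If `α` is such a root, `s_α w` has a smaller moved space; if
there is no such root, `w` fixes a point on no mirror, hence is trivial, because the group acts
freely on chambers.
-/

/-! ### Reflections and the groups they generate -/

section Reflection

lemma reflV_apply (α v : V) : reflV α v = v - ⟪v, coroot α⟫ • α := by
  by_cases h : ⟪α, α⟫ = 0
  · simp [reflV, inner_self_eq_zero.mp h]
  · simp only [reflV, h, dite_false, Module.reflection_apply]
    rfl

omit [FiniteDimensional ℝ V] in
lemma inner_coroot (α v : V) : ⟪v, coroot α⟫ = 2 / ⟪α, α⟫ * ⟪v, α⟫ := by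
  rw [coroot, real_inner_smul_right]

lemma reflV_apply_eq_reflection (α v : V) : reflV α v = (ℝ ∙ α)ᗮ.reflection v := by
  rw [reflV_apply, inner_coroot, Submodule.reflection_orthogonal_apply,
    Submodule.reflection_singleton_apply, RCLike.ofReal_real_eq_id, id,
    ← real_inner_self_eq_norm_sq, real_inner_comm v α]
  module

lemma reflV_reflV (α v : V) : reflV α (reflV α v) = v := by
  simp only [reflV_apply_eq_reflection, Submodule.reflection_reflection]

lemma reflV_mul_self (α : V) : reflV α * reflV α = 1 :=
  LinearEquiv.ext (reflV_reflV α)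

lemma reflV_inv (α : V) : (reflV α)⁻¹ = reflV α :=
  inv_eq_of_mul_eq_one_left (reflV_mul_self α)

lemma reflV_self (α : V) : reflV α α = -α := by
  rw [reflV_apply_eq_reflection, Submodule.reflection_orthogonalComplement_singleton_eq_neg]

lemma inner_reflV_reflV (α u v : V) : ⟪reflV α u, reflV α v⟫ = ⟪u, v⟫ := by
  simp only [reflV_apply_eq_reflection, LinearIsometryEquiv.inner_map_map]

lemma inner_reflV_left (α u v : V) : ⟪reflV α u, v⟫ = ⟪u, reflV α v⟫ := by
  rw [← inner_reflV_reflV α, reflV_reflV]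

lemma reflV_smul {c : ℝ} (hc : c ≠ 0) (α : V) : reflV (c • α) = reflV α := by
  ext v
  simp only [reflV_apply_eq_reflection, Submodule.span_singleton_smul_eq hc.isUnit]

lemma reflV_reflV_eq_conj (α β : V) : reflV (reflV α β) = reflV α * reflV β * reflV α := by
  ext v
  simp only [LinearEquiv.mul_apply, reflV_apply (reflV α β), reflV_apply β, inner_coroot,
    inner_reflV_left, map_sub, map_smul, reflV_reflV]

lemma inner_mul_inner_lt_of_reflV_ne {α β : V} (hα : α ≠ 0) (hβ : β ≠ 0)
    (h : reflV α ≠ reflV β) : ⟪α, β⟫ ^ 2 < ⟪α, α⟫ * ⟪β, β⟫ := by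
  refine lt_of_le_of_ne (sq ⟪α, β⟫ ▸ real_inner_mul_inner_self_le α β) fun heq => h ?_
  have hnorm : ‖⟪α, β⟫‖ = ‖α‖ * ‖β‖ := by
    rw [← sq_eq_sq₀ (norm_nonneg _) (by positivity), mul_pow, ← real_inner_self_eq_norm_sq α,
      ← real_inner_self_eq_norm_sq β, Real.norm_eq_abs, sq_abs, heq]
  obtain ⟨r, hr, rfl⟩ := (norm_inner_eq_norm_iff hα hβ).mp hnorm
  exact (reflV_smul hr α).symm

lemma reflV_mem_weyl {Ψ : Set V} {α : V} (hα : α ∈ Ψ) : reflV α ∈ weyl Ψ :=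
  Subgroup.subset_closure ⟨α, hα, rfl⟩

lemma weyl_mono {Ψ Ψ' : Set V} (h : Ψ ⊆ Ψ') : weyl Ψ ≤ weyl Ψ' :=
  Subgroup.closure_mono fun _ ⟨α, hα, hw⟩ => ⟨α, h hα, hw⟩

@[elab_as_elim]
lemma weyl_induction {Ψ : Set V} {motive : (w : V ≃ₗ[ℝ] V) → w ∈ weyl Ψ → Prop}
    (one : motive 1 (one_mem _))
    (reflV_mul : ∀ (α : V) (hα : α ∈ Ψ) (w : V ≃ₗ[ℝ] V) (hw : w ∈ weyl Ψ),
      motive w hw → motive (reflV α * w) (mul_mem (reflV_mem_weyl hα) hw))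
    {w : V ≃ₗ[ℝ] V} (hw : w ∈ weyl Ψ) : motive w hw := by
  induction hw using Subgroup.closure_induction_left with
  | one => exact one
  | mul_left x hx w hw ih =>
    obtain ⟨α, hα, rfl⟩ := hx
    exact reflV_mul α hα w hw ih
  | inv_mul_cancel x hx w hw ih =>
    obtain ⟨α, hα, rfl⟩ := hx
    simpa only [reflV_inv] using reflV_mul α hα w hw ih

lemma inner_map_map_of_mem_weyl {Ψ : Set V} {w : V ≃ₗ[ℝ] V} (hw : w ∈ weyl Ψ) (u v : V) :
    ⟪w u, w v⟫ = ⟪u, v⟫ := by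
  induction hw using weyl_induction with
  | one => rfl
  | reflV_mul α _ w _ ih => rw [LinearEquiv.mul_apply, LinearEquiv.mul_apply, inner_reflV_reflV, ih]

lemma exists_list_prod_of_mem_weyl {Ψ : Set V} {w : V ≃ₗ[ℝ] V} (hw : w ∈ weyl Ψ) :
    ∃ L : List V, (∀ α ∈ L, α ∈ Ψ) ∧ (L.map reflV).prod = w := by
  induction hw using weyl_induction with
  | one => exact ⟨[], by simp, rfl⟩
  | reflV_mul α hα w _ ih =>
    obtain ⟨L, hL, rfl⟩ := ih
    exact ⟨α :: L, List.forall_mem_cons.mpr ⟨hα, hL⟩, by simp⟩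

end Reflection

/-! ### Chambers and their walls -/

/-- A finite root system in the sense of reflection groups: a finite set of nonzero vectors stable
under its own reflections. It need not be reduced, crystallographic or spanning. -/
structure IsRootSet (Ψ : Set V) : Prop where
  finite : Ψ.Finite
  zero_notMem : (0 : V) ∉ Ψ
  reflV_mem : ∀ α ∈ Ψ, ∀ β ∈ Ψ, reflV α β ∈ Ψ

lemma IsRootSet.apply_mem {Ψ : Set V} (hΨ : IsRootSet Ψ) {w : V ≃ₗ[ℝ] V} (hw : w ∈ weyl Ψ)
    {α : V} (hα : α ∈ Ψ) : w α ∈ Ψ := by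
  induction hw using weyl_induction with
  | one => exact hα
  | reflV_mul β hβ w _ ih => exact hΨ.reflV_mem β hβ _ ih

/-- The elements of `Ψ` defining the walls of the chamber that contains `p`, encoded without
choosing simple roots: the mirror of `α` is a wall if no other mirror separates `p` from its
image `reflV α p`. -/
def walls (Ψ : Set V) (p : V) : Set V :=
  {α ∈ Ψ | ∀ β ∈ Ψ, ⟪p, β⟫ * ⟪reflV α p, β⟫ < 0 → reflV β = reflV α}

/-- The squared distance from `p` to the mirror of `α`; the induction that generates the group
from the walls decreases it. -/
def mirrorDistSq (p α : V) : ℝ := ⟪p, α⟫ ^ 2 / ⟪α, α⟫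

section Walls

variable {Ψ : Set V} {p α β : V}

lemma inner_reflV_eq_sub (α β p : V) :
    ⟪p, reflV α β⟫ = ⟪p, β⟫ - 2 * ⟪α, β⟫ * ⟪p, α⟫ / ⟪α, α⟫ := by
  rw [reflV_apply, inner_coroot, inner_sub_right, real_inner_smul_right, real_inner_comm α β]
  ring

/-- With `a = ⟪p, α⟫`, `b = ⟪p, β⟫` and `k = ⟪α, β⟫`, this bounds `|a|` by `|k b| / ⟪β, β⟫` once the
mirror of `α` separates `p` from `reflV β p` and `p` is not farther from it than `reflV β p`. -/
lemma inner_bounds_of_separates (hβ : β ≠ 0) (hsep : ⟪p, α⟫ * ⟪reflV β p, α⟫ < 0)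
    (hle : ⟪p, α⟫ ^ 2 ≤ ⟪reflV β p, α⟫ ^ 2) :
    0 < ⟪α, β⟫ * ⟪p, α⟫ * ⟪p, β⟫ ∧
      ⟪β, β⟫ * (⟪α, β⟫ * ⟪p, α⟫ * ⟪p, β⟫) ≤ (⟪α, β⟫ * ⟪p, β⟫) ^ 2 := by
  have hB : 0 < ⟪β, β⟫ := real_inner_self_pos.mpr hβ
  rw [inner_reflV_left, inner_reflV_eq_sub, real_inner_comm α β] at hsep hle
  generalize ⟪p, α⟫ = a at *
  generalize ⟪p, β⟫ = b at *
  generalize ⟪α, β⟫ = k at *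
  generalize ⟪β, β⟫ = B at *
  obtain ⟨t, ht⟩ : ∃ t, t = k * b / B := ⟨_, rfl⟩
  have htB : t * B = k * b := by rw [ht, div_mul_cancel₀ _ hB.ne']
  have h2t : 2 * k * b / B = 2 * t := by rw [ht]; ring
  rw [h2t] at hsep hle
  have hat : 0 < a * t := by nlinarith [sq_nonneg a]
  have hat_le : a * t ≤ t ^ 2 := by nlinarith
  rw [mul_right_comm, ← htB]
  constructor
  · nlinarith [mul_pos hat hB]
  · nlinarith [mul_le_mul_of_nonneg_right hat_le (sq_nonneg B)]

lemma mirrorDistSq_lt_and_lt (hα : α ≠ 0) (hβ : β ≠ 0) (hne : reflV α ≠ reflV β)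
    (hsep : ⟪p, α⟫ * ⟪reflV β p, α⟫ < 0) (hle : ⟪p, α⟫ ^ 2 ≤ ⟪reflV β p, α⟫ ^ 2) :
    mirrorDistSq p α < mirrorDistSq p β ∧ mirrorDistSq p (reflV α β) < mirrorDistSq p β := by
  have hA : 0 < ⟪α, α⟫ := real_inner_self_pos.mpr hα
  have hB : 0 < ⟪β, β⟫ := real_inner_self_pos.mpr hβ
  have hk : ⟪α, β⟫ ^ 2 < ⟪α, α⟫ * ⟪β, β⟫ := inner_mul_inner_lt_of_reflV_ne hα hβ hne
  obtain ⟨hpos, hbound⟩ := inner_bounds_of_separates hβ hsep hle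
  simp only [mirrorDistSq, inner_reflV_reflV, inner_reflV_eq_sub α β p]
  generalize ⟪p, α⟫ = a at *
  generalize ⟪p, β⟫ = b at *
  generalize ⟪α, β⟫ = k at *
  generalize ⟪α, α⟫ = A at *
  generalize ⟪β, β⟫ = B at *
  have ha : 0 < a ^ 2 := sq_pos_of_ne_zero fun h => by simp [h] at hpos
  have hb : 0 < b ^ 2 := sq_pos_of_ne_zero fun h => by simp [h] at hpos
  have hkb : 0 < (k * b) ^ 2 := (mul_pos hB hpos).trans_le hbound
  have haB : B * a ^ 2 ≤ k * a * b := by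
    refine le_of_mul_le_mul_left ?_ hkb
    calc (k * b) ^ 2 * (B * a ^ 2) = B * (k * a * b) * (k * a * b) := by ring
      _ ≤ (k * b) ^ 2 * (k * a * b) := mul_le_mul_of_nonneg_right hbound hpos.le
  have hfst : a ^ 2 * B < b ^ 2 * A := by
    refine lt_of_mul_lt_mul_right ?_ hB.le
    calc a ^ 2 * B * B = B * (B * a ^ 2) := by ring
      _ ≤ B * (k * a * b) := mul_le_mul_of_nonneg_left haB hB.le
      _ ≤ k ^ 2 * b ^ 2 := mul_pow k b 2 ▸ hbound
      _ < A * B * b ^ 2 := mul_lt_mul_of_pos_right hk hb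
      _ = b ^ 2 * A * B := by ring
  have hsnd : k ^ 2 * a ^ 2 < A * (k * a * b) :=
    calc k ^ 2 * a ^ 2 < A * B * a ^ 2 := mul_lt_mul_of_pos_right hk ha
      _ = A * (B * a ^ 2) := mul_assoc _ _ _
      _ ≤ A * (k * a * b) := mul_le_mul_of_nonneg_left haB hA.le
  refine ⟨(div_lt_div_iff₀ hA hB).mpr hfst, div_lt_div_of_pos_right ?_ hB⟩
  have hexpand : (b - 2 * k * a / A) ^ 2 =
      b ^ 2 - 4 * (A * (k * a * b) - k ^ 2 * a ^ 2) / A ^ 2 := by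
    field_simp
    ring
  rw [hexpand]
  exact sub_lt_self _ (by have := sub_pos.mpr hsnd; positivity)

theorem weyl_le_weyl_walls (hΨ : IsRootSet Ψ) (p : V) : weyl Ψ ≤ weyl (walls Ψ p) := by
  suffices h : ∀ β ∈ Ψ, reflV β ∈ weyl (walls Ψ p) by
    refine (Subgroup.closure_le _).mpr ?_
    rintro _ ⟨β, hβ, rfl⟩
    exact h β hβ
  by_contra! hbad
  obtain ⟨β, ⟨hβ, hβW⟩, hmin⟩ := Set.exists_min_image {β ∈ Ψ | reflV β ∉ weyl (walls Ψ p)}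
    (mirrorDistSq p) (hΨ.finite.subset (Set.sep_subset _ _)) hbad
  have hgood {α : V} (hα : α ∈ Ψ) (hlt : mirrorDistSq p α < mirrorDistSq p β) :
      reflV α ∈ weyl (walls Ψ p) :=
    not_not.mp fun hαW => (hmin α ⟨hα, hαW⟩).not_gt hlt
  obtain ⟨α, hα, hsep, hne, hle⟩ : ∃ α ∈ Ψ, ⟪p, α⟫ * ⟪reflV β p, α⟫ < 0 ∧
      reflV α ≠ reflV β ∧ ⟪p, α⟫ ^ 2 ≤ ⟪reflV β p, α⟫ ^ 2 := by
    have hwall : β ∉ walls Ψ p := fun h => hβW (reflV_mem_weyl h)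
    simp only [walls, Set.mem_ofPred_eq, not_and, not_forall] at hwall
    obtain ⟨α, hα, hsep, hne⟩ := hwall hβ
    rcases le_total (⟪p, α⟫ ^ 2) (⟪reflV β p, α⟫ ^ 2) with hle | hle
    · exact ⟨α, hα, hsep, hne, hle⟩
    · refine ⟨reflV β α, hΨ.reflV_mem β hβ α hα, ?_, fun h => hne ?_, ?_⟩
      · rwa [inner_reflV_reflV, ← inner_reflV_left, mul_comm]
      · rw [← reflV_reflV β α, reflV_reflV_eq_conj, h, reflV_mul_self, one_mul]
      · rwa [inner_reflV_reflV, ← inner_reflV_left]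
  have hα0 : α ≠ 0 := fun h => hΨ.zero_notMem (h ▸ hα)
  have hβ0 : β ≠ 0 := fun h => hΨ.zero_notMem (h ▸ hβ)
  obtain ⟨hltα, hltαβ⟩ := mirrorDistSq_lt_and_lt hα0 hβ0 hne hsep hle
  have hαW := hgood hα hltα
  have hαβW := hgood (hΨ.reflV_mem α hα β hβ) hltαβ
  refine hβW ?_
  rw [← reflV_reflV α β, reflV_reflV_eq_conj]
  exact mul_mem (mul_mem hαW hαβW) hαW

variable (hΨ : IsRootSet Ψ) (hp : ∀ α ∈ Ψ, ⟪p, α⟫ ≠ 0)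
include hΨ hp

lemma exists_shorter_list_of_separates {L : List V} (hL : ∀ a ∈ L, a ∈ walls Ψ p) (hα : α ∈ Ψ)
    (hsep : ⟪p, α⟫ * ⟪(L.map reflV).prod p, α⟫ < 0) :
    ∃ L' : List V, (∀ a ∈ L', a ∈ walls Ψ p) ∧ L'.length < L.length ∧
      (L'.map reflV).prod = reflV α * (L.map reflV).prod := by
  induction L generalizing α with
  | nil => exact absurd hsep (mul_self_nonneg ⟪p, α⟫).not_gt
  | cons a L ih =>
    obtain ⟨ha, hL⟩ := List.forall_mem_cons.mp hL
    simp only [List.map_cons, List.prod_cons, LinearEquiv.mul_apply, inner_reflV_left] at hsep ⊢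
    by_cases hαa : ⟪p, α⟫ * ⟪reflV a p, α⟫ < 0
    · refine ⟨L, hL, Nat.lt_succ_self _, ?_⟩
      rw [ha.2 α hα hαa, ← mul_assoc, reflV_mul_self, one_mul]
    · have hα' := hΨ.reflV_mem a ha.1 α hα
      have hne : ⟪p, reflV a α⟫ ≠ 0 := hp _ hα'
      rw [inner_reflV_left] at hαa
      have hsep' : ⟪p, reflV a α⟫ * ⟪(L.map reflV).prod p, reflV a α⟫ < 0 := by
        rcases hne.lt_or_gt with h | h <;> rcases (hp α hα).lt_or_gt with h' | h' <;> nlinarith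
      obtain ⟨L', hL', hlen, hprod⟩ := ih hL hα' hsep'
      refine ⟨a :: L', List.forall_mem_cons.mpr ⟨ha, hL'⟩, Nat.succ_lt_succ hlen, ?_⟩
      rw [List.map_cons, List.prod_cons, hprod, reflV_reflV_eq_conj]
      simp only [← mul_assoc, reflV_mul_self, one_mul]

lemma prod_eq_one_of_apply_eq {L : List V} (hL : ∀ a ∈ L, a ∈ walls Ψ p)
    (hfix : (L.map reflV).prod p = p) : (L.map reflV).prod = 1 := by
  induction hn : L.length using Nat.strong_induction_on generalizing L with
  | h n ih =>
    cases L with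
    | nil => rfl
    | cons a L =>
      obtain ⟨ha, hL⟩ := List.forall_mem_cons.mp hL
      simp only [List.map_cons, List.prod_cons, LinearEquiv.mul_apply] at hfix ⊢
      have hsep : ⟪p, a⟫ * ⟪(L.map reflV).prod p, a⟫ < 0 := by
        rw [← reflV_reflV a ((L.map reflV).prod p), hfix, inner_reflV_left, reflV_self,
          inner_neg_right, mul_neg, neg_lt_zero]
        exact mul_self_pos.mpr (hp a ha.1)
      obtain ⟨L', hL', hlen, hprod⟩ := exists_shorter_list_of_separates hΨ hp hL ha.1 hsep
      rw [← hprod]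
      exact ih _ (by simp at hn; omega) hL' (by rw [hprod, LinearEquiv.mul_apply, hfix]) rfl

theorem eq_one_of_mem_weyl_of_apply_eq {w : V ≃ₗ[ℝ] V} (hw : w ∈ weyl Ψ) (hfix : w p = p) :
    w = 1 := by
  obtain ⟨L, hL, rfl⟩ := exists_list_prod_of_mem_weyl (weyl_le_weyl_walls hΨ p hw)
  exact prod_eq_one_of_apply_eq hΨ hp hL hfix

end Walls

/-! ### The moved space -/

/-- The moved space `im (w - 1)` of a linear automorphism `w`. For an isometry `w` it is the
orthogonal complement of the space of fixed vectors. -/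
def movedSpace (w : V ≃ₗ[ℝ] V) : Submodule ℝ V :=
  LinearMap.range ((w : V →ₗ[ℝ] V) - LinearMap.id)

section MovedSpace

variable {Ψ Ψ' : Set V} {w : V ≃ₗ[ℝ] V}

omit [FiniteDimensional ℝ V] in
lemma apply_sub_self_mem_movedSpace (w : V ≃ₗ[ℝ] V) (v : V) : w v - v ∈ movedSpace w :=
  ⟨v, rfl⟩

omit [FiniteDimensional ℝ V] in
lemma movedSpace_le_iff {U : Submodule ℝ V} : movedSpace w ≤ U ↔ ∀ v, w v - v ∈ U :=
  Set.range_subset_iff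

omit [FiniteDimensional ℝ V] in
lemma mem_orthogonal_movedSpace_iff (hw : ∀ u v, ⟪w u, w v⟫ = ⟪u, v⟫) {x : V} :
    x ∈ (movedSpace w)ᗮ ↔ w x = x := by
  constructor
  · intro hx
    refine ext_inner_right ℝ fun y => ?_
    obtain ⟨v, rfl⟩ := w.surjective y
    have h := (Submodule.mem_orthogonal' _ _).mp hx _ (apply_sub_self_mem_movedSpace w v)
    rw [inner_sub_right, sub_eq_zero] at h
    rw [hw, h]
  · intro hx
    refine (Submodule.mem_orthogonal' _ _).mpr ?_
    rintro _ ⟨v, rfl⟩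
    change ⟪x, w v - v⟫ = 0
    rw [inner_sub_right, sub_eq_zero, ← hw x v, hx]

lemma reflV_mul_apply_sub (α v : V) (w : V ≃ₗ[ℝ] V) :
    (reflV α * w) v - v = (w v - v) - ⟪w v, coroot α⟫ • α := by
  rw [LinearEquiv.mul_apply, reflV_apply]
  abel

lemma movedSpace_le_span (hw : w ∈ weyl Ψ) : movedSpace w ≤ Submodule.span ℝ Ψ := by
  induction hw using weyl_induction with
  | one => exact movedSpace_le_iff.mpr fun v => by simp
  | reflV_mul α hα w _ ih =>
    refine movedSpace_le_iff.mpr fun v => ?_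
    rw [reflV_mul_apply_sub]
    exact sub_mem (movedSpace_le_iff.mp ih v) (Submodule.smul_mem _ _ (Submodule.subset_span hα))

lemma reflV_sub_apply {u v : V} (h : ‖u‖ = ‖v‖) : reflV (u - v) u = v := by
  rw [reflV_apply_eq_reflection, Submodule.reflection_sub h]

lemma movedSpace_reflV_mul_lt (hw : ∀ u v, ⟪w u, w v⟫ = ⟪u, v⟫) {α : V} (hα : α ≠ 0)
    (hmem : α ∈ movedSpace w) : movedSpace (reflV α * w) < movedSpace w := by
  have hle : movedSpace (reflV α * w) ≤ movedSpace w :=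
    movedSpace_le_iff.mpr fun v => reflV_mul_apply_sub α v w ▸
      sub_mem (apply_sub_self_mem_movedSpace w v) (Submodule.smul_mem _ _ hmem)
  refine hle.lt_of_ne fun heq => ?_
  obtain ⟨v, rfl⟩ := hmem
  have hnorm : ‖w v‖ = ‖v‖ := by
    rw [norm_eq_sqrt_real_inner, hw, ← norm_eq_sqrt_real_inner]
  have hisom : ∀ x y, ⟪(reflV (w v - v) * w) x, (reflV (w v - v) * w) y⟫ = ⟪x, y⟫ := fun x y => by
    simp only [LinearEquiv.mul_apply, inner_reflV_reflV, hw]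
  have hfix : v ∈ (movedSpace (reflV (w v - v) * w))ᗮ :=
    (mem_orthogonal_movedSpace_iff hisom).mpr (reflV_sub_apply hnorm)
  exact hα (sub_eq_zero.mpr ((mem_orthogonal_movedSpace_iff hw).mp (heq ▸ hfix)))

lemma exists_mem_orthogonal_forall_inner_ne_zero (hfin : Ψ.Finite) {U : Submodule ℝ V}
    (hU : ∀ α ∈ Ψ, α ∉ U) : ∃ p ∈ Uᗮ, ∀ α ∈ Ψ, ⟪p, α⟫ ≠ 0 := by
  have : Finite Ψ := hfin
  have hsep (α : Ψ) : ∃ x ∈ Uᗮ, innerₗ V (α : V) x ≠ 0 := by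
    by_contra! h
    refine hU α α.2 ?_
    rw [← Submodule.orthogonal_orthogonal U]
    exact (Submodule.mem_orthogonal' _ _).mpr h
  obtain ⟨p, hpU, hp⟩ := Module.Dual.exists_forall_mem_ne_zero_of_forall_exists Uᗮ _ hsep
  exact ⟨p, hpU, fun α hα => real_inner_comm α p ▸ hp ⟨α, hα⟩⟩

theorem mem_weyl_inter_movedSpace (hΨ : IsRootSet Ψ) (hw : w ∈ weyl Ψ) :
    w ∈ weyl (Ψ ∩ movedSpace w) := by
  induction hU : movedSpace w using WellFoundedLT.induction generalizing w with
  | ind U ih =>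
    subst hU
    have hisom := inner_map_map_of_mem_weyl hw
    by_cases! h : ∃ α ∈ Ψ, α ∈ movedSpace w
    · obtain ⟨α, hα, hαw⟩ := h
      have hlt := movedSpace_reflV_mul_lt hisom (fun h0 => hΨ.zero_notMem (h0 ▸ hα)) hαw
      have hu : reflV α * w ∈ weyl (Ψ ∩ movedSpace w) :=
        weyl_mono (Set.inter_subset_inter_right _ hlt.le)
          (ih _ hlt (mul_mem (reflV_mem_weyl hα) hw) rfl)
      have hα' : reflV α ∈ weyl (Ψ ∩ movedSpace w) := reflV_mem_weyl ⟨hα, hαw⟩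
      simpa only [← mul_assoc, reflV_mul_self, one_mul] using mul_mem hα' hu
    · obtain ⟨p, hpw, hp⟩ := exists_mem_orthogonal_forall_inner_ne_zero hΨ.finite h
      rw [eq_one_of_mem_weyl_of_apply_eq hΨ hp hw ((mem_orthogonal_movedSpace_iff hisom).mp hpw)]
      exact one_mem _

theorem mem_weyl_inter_span (hΨ : IsRootSet Ψ) (hw : w ∈ weyl Ψ) (hw' : w ∈ weyl Ψ') :
    w ∈ weyl (Ψ ∩ Submodule.span ℝ Ψ') :=
  weyl_mono (Set.inter_subset_inter_right _ (movedSpace_le_span hw'))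
    (mem_weyl_inter_movedSpace hΨ hw)

end MovedSpace

/-! ### The action on weights -/

section Weights

variable {Ψ Φ' : Set V} {w : V ≃ₗ[ℝ] V} {l m : HStar V}

omit [FiniteDimensional ℝ V] in
lemma wAct_mul (u v : V ≃ₗ[ℝ] V) (l : HStar V) : wAct (u * v) l = wAct u (wAct v l) :=
  rfl

omit [FiniteDimensional ℝ V] in
lemma wAct_eq_wAct_iff {u v : V ≃ₗ[ℝ] V} :
    wAct v l = wAct w (wAct u l) ↔ wAct (v⁻¹ * w * u) l = l := by
  rw [mul_assoc, wAct_mul, wAct_mul]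
  constructor
  · intro h
    rw [← h, ← wAct_mul, inv_mul_cancel]
    rfl
  · intro h
    nth_rw 1 [← h]
    rw [← wAct_mul, mul_inv_cancel]
    rfl

lemma sRefl_eq_wAct_reflV (γ : V) (l : HStar V) : sRefl γ l = wAct (reflV γ) l := by
  ext v
  change l v - l (coroot γ) * (⟪γ, v⟫ : ℂ) = l ((reflV γ)⁻¹ v)
  rw [reflV_inv, reflV_apply, map_sub, map_smul, inner_coroot, coroot, map_smul,
    Complex.real_smul, Complex.real_smul, real_inner_comm v γ]
  push_cast
  ring

omit [FiniteDimensional ℝ V] in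
lemma wAct_eq_self_iff : wAct w l = l ↔ movedSpace w ≤ LinearMap.ker l := by
  rw [movedSpace_le_iff]
  constructor
  · intro h v
    rw [LinearMap.mem_ker, map_sub, sub_eq_zero]
    nth_rw 1 [← h]
    exact congrArg l (w.symm_apply_apply v)
  · refine fun h => LinearMap.ext fun v => ?_
    have hv := h (w.symm v)
    rw [w.apply_symm_apply, LinearMap.mem_ker, map_sub, sub_eq_zero] at hv
    exact hv.symm

theorem mem_weyl_of_wAct_eq_self (hΨ : IsRootSet Ψ) (hw : w ∈ weyl Ψ) (hl : wAct w l = l) :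
    w ∈ weyl {α ∈ Ψ | l α = 0} :=
  weyl_mono (Set.inter_subset_inter_right _ (wAct_eq_self_iff.mp hl))
    (mem_weyl_inter_movedSpace hΨ hw)

lemma wAct_eq_self_iff_of_eqOn (hlm : Set.EqOn l m Φ') (hw : w ∈ weyl Φ') :
    wAct w l = l ↔ wAct w m = m := by
  have heq {x : V} (hx : x ∈ movedSpace w) : l x = m x :=
    LinearMap.eqOn_span hlm (movedSpace_le_span hw hx)
  rw [wAct_eq_self_iff, wAct_eq_self_iff]
  exact forall₂_congr fun x hx => by rw [LinearMap.mem_ker, LinearMap.mem_ker, heq hx]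

omit [FiniteDimensional ℝ V] in
lemma inner_self_div_two_smul_coroot (α : V) : (⟪α, α⟫ / 2) • coroot α = α := by
  rcases eq_or_ne α 0 with rfl | hα
  · simp
  · have := real_inner_self_pos.mpr hα
    rw [coroot, smul_smul, div_mul_div_cancel₀ two_ne_zero, div_self this.ne', one_smul]

omit [FiniteDimensional ℝ V] in
lemma emb_mem_span {u : V} (hu : u ∈ Submodule.span ℝ Φ') :
    emb u ∈ Submodule.span ℂ (emb '' Φ') := by
  induction hu using Submodule.span_induction with
  | mem x hx => exact Submodule.subset_span ⟨x, hx, rfl⟩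
  | zero =>
    convert Submodule.zero_mem _
    ext v
    simp [emb]
  | add x y _ _ hx hy =>
    convert add_mem hx hy
    ext v
    simp [emb, inner_add_left]
  | smul c x _ hx =>
    convert Submodule.smul_mem _ (c : ℂ) hx
    ext v
    simp [emb, real_inner_smul_left]

lemma exists_eq_emb_add_I_smul_emb (l : HStar V) :
    ∃ a b : V, l = emb a + Complex.I • emb b := by
  let toVec (f : V →ₗ[ℝ] ℝ) : V :=
    (InnerProductSpace.toDual ℝ V).symm (LinearMap.toContinuousLinearMap f)
  have inner_toVec (f : V →ₗ[ℝ] ℝ) (v : V) : ⟪toVec f, v⟫ = f v :=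
    InnerProductSpace.toDual_symm_apply
  refine ⟨toVec (Complex.reLm ∘ₗ l), toVec (Complex.imLm ∘ₗ l), LinearMap.ext fun v => ?_⟩
  simp only [emb, LinearMap.add_apply, LinearMap.smul_apply, LinearMap.coe_mk, AddHom.coe_mk,
    inner_toVec, smul_eq_mul, mul_comm Complex.I]
  exact (Complex.re_add_im (l v)).symm

lemma exists_mem_span_emb_eqOn (Φ' : Set V) (l : HStar V) :
    ∃ m ∈ Submodule.span ℂ (emb '' Φ'), Set.EqOn m l (Submodule.span ℝ Φ') := by
  obtain ⟨a, b, rfl⟩ := exists_eq_emb_add_I_smul_emb l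
  let U := Submodule.span ℝ Φ'
  have hU (c : V) : emb (U.starProjection c) ∈ Submodule.span ℂ (emb '' Φ') :=
    emb_mem_span (U.starProjection_apply_mem c)
  refine ⟨emb (U.starProjection a) + Complex.I • emb (U.starProjection b),
    add_mem (hU a) (Submodule.smul_mem _ _ (hU b)), fun x hx => ?_⟩
  have hx' : U.starProjection x = x := U.starProjection_eq_self_iff.mpr hx
  simp only [emb, LinearMap.add_apply, LinearMap.smul_apply, LinearMap.coe_mk, AddHom.coe_mk,
    Submodule.inner_starProjection_left_eq_right, hx']

theorem restrictW_eqOn (Φ' : Set V) (l : HStar V) : Set.EqOn (restrictW Φ' l) l Φ' := by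
  have hex : ∃ m : HStar V,
      m ∈ Submodule.span ℂ (emb '' Φ') ∧ ∀ α ∈ Φ', m (coroot α) = l (coroot α) := by
    obtain ⟨m, hm, hml⟩ := exists_mem_span_emb_eqOn Φ' l
    exact ⟨m, hm, fun α hα => hml (Submodule.smul_mem _ _ (Submodule.subset_span hα))⟩
  have : Nonempty (HStar V) := ⟨0⟩
  have hspec : ∀ α ∈ Φ', restrictW Φ' l (coroot α) = l (coroot α) :=
    (Classical.epsilon_spec hex).2
  intro α hα
  rw [← inner_self_div_two_smul_coroot α, map_smul, map_smul, hspec α hα]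

end Weights

/-! ### Subsystems -/

lemma exists_rat_solution {ι κ : Type*} {t : Finset ι} {N : ι → κ → ℚ} {n : κ → ℚ} {c : ι → ℝ}
    (hc : ∀ k, ∑ i ∈ t, c i * N i k = n k) :
    ∃ q : ι → ℚ, ∀ k, ∑ i ∈ t, q i * N i k = n k := by
  obtain ⟨π, hπ⟩ := LinearMap.exists_leftInverse_of_injective (Algebra.linearMap ℚ ℝ)
    (LinearMap.ker_eq_bot.mpr (algebraMap ℚ ℝ).injective)
  have hπ_ratCast (q : ℚ) : π (q : ℝ) = q := LinearMap.congr_fun hπ q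
  have hπ_mul (r : ℝ) (q : ℚ) : π (r * q) = π r * q := by
    rw [mul_comm r, ← Rat.smul_def, map_smul, smul_eq_mul, mul_comm]
  refine ⟨fun i => π (c i), fun k => ?_⟩
  rw [← hπ_ratCast (n k), ← hc k, map_sum]
  exact Finset.sum_congr rfl fun i _ => (hπ_mul _ _).symm

section Subsystems

variable {S : RootSys V} {Ψ A : Set V} {U : Submodule ℝ V} {l m : HStar V}

lemma eq_of_forall_inner_coroot_eq (S : RootSys V) {x y : V}
    (h : ∀ δ ∈ S.Φ, ⟪x, coroot δ⟫ = ⟪y, coroot δ⟫) : x = y := by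
  have heq : innerₗ V x = innerₗ V y := LinearMap.ext_on S.span_eq_top fun δ hδ => by
    rw [← inner_self_div_two_smul_coroot δ, map_smul, map_smul]
    exact congrArg _ (h δ hδ)
  exact ext_inner_right ℝ fun v => LinearMap.congr_fun heq v

/-- Real coefficients can be made rational because they solve an integral linear system, that of
the pairings with the coroots. -/
theorem ratSpanRoots_eq_inter_span (hA : A ⊆ S.Φ) :
    ratSpanRoots S A = (S.Φ : Set V) ∩ Submodule.span ℝ A := by
  ext γ
  constructor
  · rintro ⟨hγ, t, c, ht, rfl⟩
    exact ⟨hγ, sum_mem fun α hα => Submodule.smul_mem _ _ (Submodule.subset_span (ht hα))⟩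
  · rintro ⟨hγ, hspan⟩
    obtain ⟨c, t, ht, -, hc⟩ := Submodule.mem_span_iff_exists_finset_subset.mp hspan
    choose! N hN using S.crystallographic
    have inner_sum (c : V → ℝ) {δ : V} (hδ : δ ∈ S.Φ) :
        ⟪∑ α ∈ t, c α • α, coroot δ⟫ = ∑ α ∈ t, c α * N δ α := by
      rw [sum_inner]
      exact Finset.sum_congr rfl fun α hα => by
        rw [real_inner_smul_left, hN δ hδ α (hA (ht hα))]
    obtain ⟨q, hq⟩ := exists_rat_solution (N := fun α (δ : S.Φ) => (N δ α : ℚ))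
      (n := fun δ => N δ γ) (t := t) (c := c) fun δ => by
        simpa [hc, hN δ δ.2 γ hγ] using (inner_sum c δ.2).symm
    refine ⟨hγ, t, q, ht, eq_of_forall_inner_coroot_eq S fun δ hδ => ?_⟩
    rw [inner_sum _ hδ, hN δ hδ γ hγ]
    exact_mod_cast (hq ⟨δ, hδ⟩).symm

lemma IsSubsystem.isRootSet (hΨ : IsSubsystem S Ψ) : IsRootSet Ψ where
  finite := S.Φ.finite_toSet.subset hΨ.1
  zero_notMem h := S.ne_zero 0 (hΨ.1 h) rfl
  reflV_mem := hΨ.2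

lemma isSubsystem_inter_submodule (S : RootSys V) (U : Submodule ℝ V) :
    IsSubsystem S ((S.Φ : Set V) ∩ U) := by
  refine ⟨Set.inter_subset_left, fun α hα β hβ => ⟨S.refl_mem α hα.1 β hβ.1, ?_⟩⟩
  rw [reflV_apply]
  exact sub_mem hβ.2 (Submodule.smul_mem _ _ hα.2)

lemma isSubsystem_PhiI (S : RootSys V) (I : Finset V) : IsSubsystem S (PhiI S I) := by
  refine ⟨Set.sep_subset _ _, fun α hα β hβ => ⟨S.refl_mem α hα.1 β hβ.1, ?_⟩⟩
  obtain ⟨n, hn⟩ := S.crystallographic α hα.1 β hβ.1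
  rw [reflV_apply, hn, Int.cast_smul_eq_zsmul]
  exact sub_mem hβ.2 (Submodule.smul_mem _ _ hα.2)

lemma isRootSet_Φ (S : RootSys V) : IsRootSet (S.Φ : Set V) :=
  IsSubsystem.isRootSet (S := S) ⟨subset_rfl, S.refl_mem⟩

/-! ### Signs -/

lemma isRegularOn_wAct_iff (hΨ : Ψ ⊆ S.Φ) (hsing : singSet S l ⊆ U)
    (hlm : Set.EqOn m l ((S.Φ : Set V) ∩ U)) {u : V ≃ₗ[ℝ] V}
    (hu : u ∈ weyl ((S.Φ : Set V) ∩ U)) :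
    IsRegularOn Ψ (wAct u l) ↔ IsRegularOn (Ψ ∩ (S.Φ ∩ U)) (wAct u m) := by
  have hstable := (isSubsystem_inter_submodule S U).isRootSet
  constructor
  · rintro hreg α ⟨hαΨ, hα⟩
    exact (hlm (hstable.apply_mem (inv_mem hu) hα)).trans_ne (hreg α hαΨ)
  · intro hreg α hα hzero
    have hpre : u⁻¹ α ∈ (S.Φ : Set V) ∩ U := by
      have hmem := (isRootSet_Φ S).apply_mem
        (inv_mem (weyl_mono Set.inter_subset_left hu)) (hΨ hα)
      exact ⟨hmem, hsing ⟨hmem, hzero⟩⟩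
    have hαU : α ∈ (S.Φ : Set V) ∩ U := by
      simpa using hstable.apply_mem hu hpre
    exact hreg α ⟨hα, hαU⟩ ((hlm hpre).trans hzero)

/-- `sgnW` takes the length of a chosen `w`; equivalent conditions make both sides choose the same
one, so no uniqueness of `w` is needed. -/
lemma sgnW_congr {Ψ Ψ' : Set V} {l m l' m' : HStar V}
    (hl : IsRegularOn Ψ l ↔ IsRegularOn Ψ' l') (hm : IsRegularOn Ψ m ↔ IsRegularOn Ψ' m')
    (hw : ∀ w, (w ∈ weyl Ψ ∧ m = wAct w l) ↔ (w ∈ weyl Ψ' ∧ m' = wAct w l')) :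
    sgnW S Ψ l m = sgnW S Ψ' l' m' := by
  simp only [sgnW, hl, hm, hw]

lemma mem_weyl_and_wAct_eq_iff (hΨ : IsSubsystem S Ψ) (hsing : singSet S l ⊆ U)
    (hlm : Set.EqOn m l ((S.Φ : Set V) ∩ U)) {u v : V ≃ₗ[ℝ] V}
    (hu : u ∈ weyl ((S.Φ : Set V) ∩ U)) (hv : v ∈ weyl ((S.Φ : Set V) ∩ U)) (w : V ≃ₗ[ℝ] V) :
    (w ∈ weyl Ψ ∧ wAct v l = wAct w (wAct u l)) ↔
      (w ∈ weyl (Ψ ∩ (S.Φ ∩ U)) ∧ wAct v m = wAct w (wAct u m)) := by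
  rw [wAct_eq_wAct_iff, wAct_eq_wAct_iff]
  have hfix_iff (hx : v⁻¹ * w * u ∈ weyl ((S.Φ : Set V) ∩ U)) :=
    wAct_eq_self_iff_of_eqOn hlm hx
  have hle : weyl ((S.Φ : Set V) ∩ U) ≤ weyl (S.Φ : Set V) := weyl_mono Set.inter_subset_left
  constructor
  · rintro ⟨hw, hfix⟩
    have hx : v⁻¹ * w * u ∈ weyl ((S.Φ : Set V) ∩ U) := by
      have hxΦ := mul_mem (mul_mem (inv_mem (hle hv)) (weyl_mono hΨ.1 hw)) (hle hu)
      have hsub : singSet S l ⊆ (S.Φ : Set V) ∩ U := fun α hα => ⟨hα.1, hsing hα⟩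
      exact weyl_mono hsub (mem_weyl_of_wAct_eq_self (isRootSet_Φ S) hxΦ hfix)
    have hwU : w ∈ weyl ((S.Φ : Set V) ∩ U) := by
      simpa [mul_assoc] using mul_mem (mul_mem hv hx) (inv_mem hu)
    refine ⟨weyl_mono ?_ (mem_weyl_inter_span hΨ.isRootSet hw hwU), (hfix_iff hx).mpr hfix⟩
    exact fun α hα => ⟨hα.1, hΨ.1 hα.1, Submodule.span_le.mpr Set.inter_subset_right hα.2⟩
  · rintro ⟨hw, hfix⟩
    have hwU := weyl_mono Set.inter_subset_right hw
    exact ⟨weyl_mono Set.inter_subset_left hw,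
      (hfix_iff (mul_mem (mul_mem (inv_mem hv) hwU) hu)).mp hfix⟩

theorem sgnW_wAct_eq_of_eqOn (hΨ : IsSubsystem S Ψ) (hsing : singSet S l ⊆ U)
    (hlm : Set.EqOn m l ((S.Φ : Set V) ∩ U)) {u v : V ≃ₗ[ℝ] V}
    (hu : u ∈ weyl ((S.Φ : Set V) ∩ U)) (hv : v ∈ weyl ((S.Φ : Set V) ∩ U)) :
    sgnW S Ψ (wAct u l) (wAct v l) = sgnW S (Ψ ∩ (S.Φ ∩ U)) (wAct u m) (wAct v m) :=
  sgnW_congr (isRegularOn_wAct_iff hΨ.1 hsing hlm hu) (isRegularOn_wAct_iff hΨ.1 hsing hlm hv)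
    (mem_weyl_and_wAct_eq_iff hΨ hsing hlm hu hv)

theorem statement_14_general (hΨ : IsSubsystem S Ψ) (hA : A ⊆ S.Φ) (hsing : singSet S l ⊆ A)
    {γ ν : V} (hγ : γ ∈ ratSpanRoots S A) (hν : ν ∈ ratSpanRoots S A) :
    sgnW S Ψ (sRefl γ l) (sRefl ν l) =
      sgnW S (Ψ ∩ ratSpanRoots S A) (sRefl γ (restrictW (ratSpanRoots S A) l))
        (sRefl ν (restrictW (ratSpanRoots S A) l)) := by
  simp only [sRefl_eq_wAct_reflV]
  rw [ratSpanRoots_eq_inter_span hA] at hγ hν ⊢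
  exact sgnW_wAct_eq_of_eqOn hΨ (hsing.trans Submodule.subset_span) (restrictW_eqOn _ l)
    (reflV_mem_weyl hγ) (reflV_mem_weyl hν)

end Subsystems

/-- Lemma 4.15: let `λ ∈ Λ_I⁺`, `β ∈ Φ \ Φ_λ` and `γ, ν ∈ Φ_{β,2}`.  Then
`sgn(s_γ λ, s_ν λ) = sgn(s_γ (λ|_{Φ_{β,2}}), s_ν (λ|_{Φ_{β,2}}), Φ_I ∩ Φ_{β,2}, Φ_{β,2})`. -/
theorem statement_14 {V : Type*} [NormedAddCommGroup V] [InnerProductSpace ℝ V]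
    [FiniteDimensional ℝ V]
    (S : RootSys V) (I : Finset V) (hI : I ⊆ S.Δ)
    (lam : HStar V) (hlam : lam ∈ LambdaP (I : Set V))
    (β : V) (hβΦ : β ∈ (S.Φ : Set V)) (hβ : β ∉ singSet S lam)
    (γ ν : V) (hγ : γ ∈ ratSpanRoots S (singSet S lam ∪ {β}))
    (hν : ν ∈ ratSpanRoots S (singSet S lam ∪ {β})) :
    sgnW S (PhiI S I) (sRefl γ lam) (sRefl ν lam) =
      sgnW S (PhiI S I ∩ ratSpanRoots S (singSet S lam ∪ {β}))
        (sRefl γ (restrictW (ratSpanRoots S (singSet S lam ∪ {β})) lam))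
        (sRefl ν (restrictW (ratSpanRoots S (singSet S lam ∪ {β})) lam)) :=
  statement_14_general (isSubsystem_PhiI S I)
    (Set.union_subset (Set.sep_subset _ _) (Set.singleton_subset_iff.mpr hβΦ))
    Set.subset_union_left hγ hν

end JantzenGVM
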